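/- arXiv:1308.3983 — 3 statements merged into one kernel-verified Lean document; each statement's English description precedes it below -/
import Mathlib

section
/- Let A be a small category, let C = Psh(A) be the category of presheaves of sets on A, and let (X_i)_{i ∈ I} be a set-indexed family of presheaves. Let W_I be the class of morphisms f : X → Y of C such that for every i ∈ I, postcomposition with f gives a bijection Hom_C(X_i, X) → Hom_C(X_i, Y). Then there exists a model structure on C whose class of weak equivalences is W_I, in which every morphism of C is a fibration, and in which the trivial cofibrations (cofibrations that are weak equivalences) are exactly the isomorphisms of C. -/
open CategoryTheory Limits

universe v u

namespace Paper

variable {C : Type u} [Category.{v} C]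

/-- The class of morphisms having the right lifting property with respect to
every morphism of `L`. -/
def rlpOf (L : MorphismProperty C) : MorphismProperty C :=
  fun _ _ g => ∀ ⦃A B : C⦄ (h : A ⟶ B), L h → HasLiftingProperty h g

/-- The class of morphisms having the left lifting property with respect to
every morphism of `R`. -/
def llpOf (R : MorphismProperty C) : MorphismProperty C :=
  fun _ _ h => ∀ ⦃A B : C⦄ (g : A ⟶ B), R g → HasLiftingProperty h g

/-- `(L, R)` is a weak factorization system. -/
structure IsWFS (L R : MorphismProperty C) : Prop where
  factor : ∀ ⦃X Y : C⦄ (f : X ⟶ Y), ∃ (Z : C) (g : X ⟶ Z) (h : Z ⟶ Y), L g ∧ R h ∧ g ≫ h = f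
  rlp_eq : R = rlpOf L
  llp_eq : L = llpOf R

/-- The two-out-of-three property for a class of morphisms. -/
def TwoOutOfThree (W : MorphismProperty C) : Prop :=
  ∀ ⦃X Y Z : C⦄ (f : X ⟶ Y) (g : Y ⟶ Z),
    (W f → W g → W (f ≫ g)) ∧ (W f → W (f ≫ g) → W g) ∧ (W (f ≫ g) → W g → W f)

/-- Intersection of two classes of morphisms. -/
def inter (P Q : MorphismProperty C) : MorphismProperty C := fun _ _ f => P f ∧ Q f

/-- The class of all morphisms. -/
def allMaps : MorphismProperty C := fun _ _ _ => True

/-- A model structure (in Quillen's sense). -/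
structure IsModelStructure (Cof Fib W : MorphismProperty C) : Prop where
  twoOutOfThree : TwoOutOfThree W
  wfs_trivCof_fib : IsWFS (inter Cof W) Fib
  wfs_cof_trivFib : IsWFS Cof (inter Fib W)

/-- The class of weak equivalences of the counting model defined by a family of
objects `(X_i)_{i ∈ I}` of `C`. -/
def countW {I : Type w} (Xi : I → C) : MorphismProperty C :=
  fun X _ f => ∀ i : I, Function.Bijective (fun h : Xi i ⟶ X => h ≫ f)

/-! A morphism induces a bijection on `Hom(T, -)` exactly when it has the right lifting property
against `∅ ⟶ T` (surjectivity) and against the codiagonal `T ⨿ T ⟶ T` (injectivity). Hence `W_I` is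
the right class of a weak factorization system produced by the small object argument. Its left class
serves as the cofibrations, and all maps as fibrations, so that trivial fibrations are the weak
equivalences. A trivial cofibration then lies in both classes of one weak factorization system, so
it lifts against itself and is an isomorphism. -/

open MorphismProperty

universe w t

section LiftingProperties

lemma hasLiftingProperty_initial_to_iff_surjective [HasInitial C] (T : C) {X Y : C} (f : X ⟶ Y) :
    HasLiftingProperty (initial.to T) f ↔ Function.Surjective fun h : T ⟶ X => h ≫ f := by
  constructor
  · intro _ b
    have sq : CommSq (initial.to X) (initial.to T) f b := ⟨initial.hom_ext _ _⟩
    exact ⟨sq.lift, sq.fac_right⟩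
  · refine fun hf => ⟨fun {_ b} _ => ?_⟩
    obtain ⟨l, hl⟩ := hf b
    exact ⟨⟨l, initial.hom_ext _ _, hl⟩⟩

lemma hasLiftingProperty_coprod_desc_id_id_iff_injective [HasBinaryCoproducts C] (T : C) {X Y : C}
    (f : X ⟶ Y) :
    HasLiftingProperty (coprod.desc (𝟙 T) (𝟙 T)) f ↔
      Function.Injective fun h : T ⟶ X => h ≫ f := by
  constructor
  · intro _ a b (hab : a ≫ f = b ≫ f)
    have sq : CommSq (coprod.desc a b) (coprod.desc (𝟙 T) (𝟙 T)) f (a ≫ f) :=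
      ⟨by ext <;> simp [hab]⟩
    calc
      a = coprod.inl ≫ coprod.desc (𝟙 T) (𝟙 T) ≫ sq.lift := by rw [sq.fac_left, coprod.inl_desc]
      _ = coprod.inr ≫ coprod.desc (𝟙 T) (𝟙 T) ≫ sq.lift := by
        rw [coprod.inl_desc_assoc, coprod.inr_desc_assoc]
      _ = b := by rw [sq.fac_left, coprod.inr_desc]
  · refine fun hf => ⟨fun {a b} sq => ?_⟩
    have inl_fac : (coprod.inl ≫ a) ≫ f = b := by
      rw [Category.assoc, sq.w, coprod.inl_desc_assoc, Category.id_comp]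
    have inr_fac : (coprod.inr ≫ a) ≫ f = b := by
      rw [Category.assoc, sq.w, coprod.inr_desc_assoc, Category.id_comp]
    have inl_eq_inr : coprod.inl ≫ a = coprod.inr ≫ a := hf (inl_fac.trans inr_fac.symm)
    exact ⟨⟨coprod.inl ≫ a,
      by ext <;> simp [coprod.inl_desc, coprod.inr_desc, inl_eq_inr], inl_fac⟩⟩

lemma isIso_of_hasLiftingProperty_self {X Y : C} (f : X ⟶ Y) [HasLiftingProperty f f] :
    IsIso f := by
  have sq : CommSq (𝟙 X) f f (𝟙 Y) := ⟨by simp⟩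
  exact ⟨sq.lift, sq.fac_left, sq.fac_right⟩

end LiftingProperties

section WeakFactorizationSystems

lemma isWFS_of_isWeakFactorizationSystem (L R : MorphismProperty C)
    [IsWeakFactorizationSystem L R] : IsWFS L R where
  factor _ _ f :=
    let d := factorizationData L R f
    ⟨d.Z, d.i, d.p, d.hi, d.hp, d.fac⟩
  rlp_eq := (rlp_eq_of_wfs L R).symm
  llp_eq := (llp_eq_of_wfs L R).symm

lemma inf_eq_isomorphisms_of_wfs (L R : MorphismProperty C) [IsWeakFactorizationSystem L R] :
    L ⊓ R = isomorphisms C := by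
  ext X Y f
  constructor
  · rintro ⟨hL, hR⟩
    have := hasLiftingProperty_of_wfs f f hL hR
    exact isIso_of_hasLiftingProperty_self f
  · intro (_ : IsIso f)
    exact ⟨llp_eq_of_wfs L R ▸ R.llp_of_isIso f, rlp_eq_of_wfs L R ▸ L.rlp_of_isIso f⟩

lemma isWeakFactorizationSystem_isomorphisms_top :
    IsWeakFactorizationSystem (isomorphisms C) ⊤ where
  rlp := top_le_iff.mp fun _ _ _ _ _ _ _ (_ : IsIso _) => inferInstance
  llp := by
    ext X Y f
    constructor
    · intro hf
      have := hf f trivial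
      exact isIso_of_hasLiftingProperty_self f
    · intro (_ : IsIso f)
      exact llp_of_isIso _ f
  hasFactorization := ⟨fun {X _} f =>
    ⟨{ Z := X, i := 𝟙 X, p := f, hi := inferInstanceAs (IsIso (𝟙 X)), hp := trivial }⟩⟩

lemma isWeakFactorizationSystem_of_hasSmallObjectArgument (G : MorphismProperty C)
    [HasSmallObjectArgument.{w} G] : IsWeakFactorizationSystem G.rlp.llp G.rlp where
  rlp := rlp_llp_rlp G
  llp := rfl

end WeakFactorizationSystems

section ModelStructures

lemma twoOutOfThree_of_hasTwoOutOfThreeProperty (W : MorphismProperty C)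
    [W.HasTwoOutOfThreeProperty] : TwoOutOfThree W := fun _ _ _ f g =>
  ⟨W.comp_mem f g, W.of_precomp f g, fun hfg hg => W.of_postcomp f g hg hfg⟩

lemma isModelStructure_allMaps_of_wfs (L W : MorphismProperty C) [W.HasTwoOutOfThreeProperty]
    [IsWeakFactorizationSystem L W] : IsModelStructure L allMaps W where
  twoOutOfThree := twoOutOfThree_of_hasTwoOutOfThreeProperty W
  wfs_trivCof_fib := by
    have := isWeakFactorizationSystem_isomorphisms_top (C := C)
    have inter_eq : inter L W = isomorphisms C := inf_eq_isomorphisms_of_wfs L W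
    exact inter_eq ▸ isWFS_of_isWeakFactorizationSystem (isomorphisms C) ⊤
  wfs_cof_trivFib := by
    have inter_eq : inter allMaps W = W := top_inf_eq W
    exact inter_eq.symm ▸ isWFS_of_isWeakFactorizationSystem L W

end ModelStructures

section SmallObjectArgument

lemma exists_forall_isCardinalPresentable {K : Type t} [Small.{w} K] (S : K → C)
    [∀ k, IsPresentable.{w} (S k)] :
    ∃ (κ : Cardinal.{w}) (_ : Fact κ.IsRegular), ∀ k, IsCardinalPresentable (S k) κ := by
  choose κ κ_regular S_presentable using fun k =>
    Functor.IsAccessible.exists_cardinal.{w} (F := coyoneda.obj (Opposite.op (S k)))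
  obtain ⟨κ', κ'_regular, κ_lt⟩ :=
    HasCardinalLT.exists_regular_cardinal_forall.{w} fun k => (κ k).ord.ToType
  have : Fact κ'.IsRegular := ⟨κ'_regular⟩
  refine ⟨κ', this, fun k => ?_⟩
  have : IsCardinalPresentable (S k) (κ k) := S_presentable k
  have κ_le : κ k ≤ κ' := by simpa [hasCardinalLT_iff_cardinal_mk_lt] using (κ_lt k).le
  exact isCardinalPresentable_of_le (S k) κ_le

lemma hasSmallObjectArgument_of_isPresentable [LocallySmall.{w} C] [HasColimitsOfSize.{w, w} C]
    (G : MorphismProperty C) [IsSmall.{w} G]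
    (presentable_source : ∀ ⦃A B : C⦄ (i : A ⟶ B), G i → IsPresentable.{w} A) :
    HasSmallObjectArgument.{w} G := by
  have (g : G.toSet) : IsPresentable.{w} g.1.left := presentable_source g.1.hom g.2
  obtain ⟨κ, κ_regular, source_presentable⟩ :=
    exists_forall_isCardinalPresentable.{_, _, w} fun g : G.toSet => g.1.left
  have : Nonempty κ.ord.ToType := by simpa using κ_regular.out.ne_zero
  let : OrderBot κ.ord.ToType := WellFoundedLT.toOrderBot κ.ord.ToType
  have : HasFiniteColimits C := hasFiniteColimits_of_hasColimitsOfSize.{w, w} C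
  refine ⟨κ, κ_regular, inferInstance, { preservesColimit := fun {A _ _ _} i hi _ _ => ?_ }⟩
  have : IsCardinalPresentable A κ := source_presentable ⟨Arrow.mk i, hi⟩
  have := preservesColimitsOfShape_of_isCardinalPresentable A κ κ.ord.ToType
  infer_instance

lemma isSmall_sup (P Q : MorphismProperty C) [IsSmall.{w} P] [IsSmall.{w} Q] :
    IsSmall.{w} (P ⊔ Q) where
  small_toSet := inferInstanceAs (Small.{w} ↑(P.toSet ∪ Q.toSet))

end SmallObjectArgument

section CountingModel

variable {I : Type t} (X : I → C)

/-- The generating cofibrations of the counting model of `(X_i)`: the morphisms `∅ ⟶ X_i`, which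
detect surjectivity on `Hom(X_i, -)`, and the codiagonals `X_i ⨿ X_i ⟶ X_i`, which detect
injectivity. -/
noncomputable def countGen [HasInitial C] [HasBinaryCoproducts C] : MorphismProperty C :=
  ofHoms (fun i => initial.to (X i)) ⊔ ofHoms (fun i => coprod.desc (𝟙 (X i)) (𝟙 (X i)))

lemma rlp_countGen [HasInitial C] [HasBinaryCoproducts C] : (countGen X).rlp = countW X := by
  ext Y Z f
  constructor
  · exact fun hf i =>
      ⟨(hasLiftingProperty_coprod_desc_id_id_iff_injective (X i) f).mp (hf _ (.inr ⟨i⟩)),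
        (hasLiftingProperty_initial_to_iff_surjective (X i) f).mp (hf _ (.inl ⟨i⟩))⟩
  · rintro hf _ _ _ (⟨⟨i⟩⟩ | ⟨⟨i⟩⟩)
    · exact (hasLiftingProperty_initial_to_iff_surjective _ f).mpr (hf i).surjective
    · exact (hasLiftingProperty_coprod_desc_id_id_iff_injective _ f).mpr (hf i).injective

lemma countW_eq_isColocal : countW X = (ObjectProperty.ofObj X).isColocal := by
  ext Y Z f
  exact ⟨fun hf _ ⟨i⟩ => hf i, fun hf i => hf (X i) ⟨i⟩⟩

lemma hasTwoOutOfThreeProperty_countW : (countW X).HasTwoOutOfThreeProperty :=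
  countW_eq_isColocal X ▸ inferInstance

lemma isWeakFactorizationSystem_llp_countW [IsLocallyPresentable.{w} C] [Small.{w} I] :
    IsWeakFactorizationSystem (countW X).llp (countW X) := by
  obtain ⟨_, _, _⟩ := IsLocallyPresentable.exists_cardinal.{w} C
  have : HasFiniteColimits C := hasFiniteColimits_of_hasColimitsOfSize.{w, w} C
  have : IsSmall.{w} (countGen X) := isSmall_sup _ _
  have : HasSmallObjectArgument.{w} (countGen X) :=
    hasSmallObjectArgument_of_isPresentable _ fun _ _ _ _ => inferInstance
  exact rlp_countGen X ▸ isWeakFactorizationSystem_of_hasSmallObjectArgument (countGen X)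

theorem stmt_3_general [IsLocallyPresentable.{w} C] [Small.{w} I] :
    ∃ Cof Fib : MorphismProperty C,
      IsModelStructure Cof Fib (countW X) ∧
        Fib = allMaps ∧
        inter Cof (countW X) = isomorphisms C := by
  have := hasTwoOutOfThreeProperty_countW X
  have := isWeakFactorizationSystem_llp_countW.{_, _, w} X
  exact ⟨(countW X).llp, allMaps, isModelStructure_allMaps_of_wfs _ _, rfl,
    inf_eq_isomorphisms_of_wfs _ _⟩

end CountingModel

/-- on a presheaf category `Psh(A)`, for any set-indexed family of
presheaves `(X_i)_{i ∈ I}`, there is a model structure whose weak equivalences are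
the morphisms inducing bijections on `Hom(X_i, -)` for all `i`, in which every
morphism is a fibration and the trivial cofibrations are exactly the isomorphisms. -/
theorem stmt_3 {A : Type u} [SmallCategory A] {I : Type u}
    (Xi : I → (Aᵒᵖ ⥤ Type u)) :
    ∃ Cof Fib : MorphismProperty (Aᵒᵖ ⥤ Type u),
      IsModelStructure Cof Fib (countW Xi) ∧
        Fib = allMaps ∧
        inter Cof (countW Xi) = MorphismProperty.isomorphisms (Aᵒᵖ ⥤ Type u) :=
  stmt_3_general.{_, _, u} Xi

end Paper
end

section
/- Let C be a model category in which every morphism is a fibration and every trivial cofibration (a cofibration that is a weak equivalence) is an isomorphism, and let γ : C → Ho(C) be the localization of C at its class of weak equivalences. Then for any two cofibrant objects A and B of C, the map Hom_C(A, B) → Hom_{Ho(C)}(γ(A), γ(B)) induced by γ is a bijection. In particular, for any objects Y, Z of C with cofibrant replacements C(Y) and C(Z), Hom_{Ho(C)}(γ(Y), γ(Z)) is in bijection with Hom_C(C(Y), C(Z)). -/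
open CategoryTheory Limits

universe v u v' u'

namespace Paper

variable {C : Type u} [Category.{v} C]

/-!
When every morphism is a fibration, the weak equivalences are exactly the morphisms with the right
lifting property against cofibrations. They are therefore stable under base change, and by
two-out-of-three the diagonal `X ⟶ X ×_Y X` of a weak equivalence `X ⟶ Y`, being a section of a
projection, is again a weak equivalence. Lifting against this diagonal shows that lifts of
cofibrations against weak equivalences are unique, so `Hom(A, -)` inverts weak equivalences as soon
as `A` is cofibrant. Hence `Hom(A, -)` factors through `γ`, which makes `γ` injective on maps out of
`A`; and it allows the formal inverses to be removed from a zigzag starting at `A` one after the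
other, which makes `γ` surjective.
-/

lemma eq_of_hasLiftingProperty_diagonal {A B X Y : C} (i : A ⟶ B) (p : X ⟶ Y) [HasPullback p p]
    [HasLiftingProperty i (pullback.diagonal p)] {l₁ l₂ : B ⟶ X} (h_left : i ≫ l₁ = i ≫ l₂)
    (h_right : l₁ ≫ p = l₂ ≫ p) : l₁ = l₂ := by
  have sq : CommSq (i ≫ l₁) i (pullback.diagonal p) (pullback.lift l₁ l₂ h_right) :=
    ⟨by ext <;> simp only [Category.assoc, pullback.diagonal_fst, pullback.diagonal_snd,
      pullback.lift_fst, pullback.lift_snd, Category.comp_id, h_left]⟩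
  calc
    l₁ = (sq.lift ≫ pullback.diagonal p) ≫ pullback.fst p p := by
      simp only [sq.fac_right, pullback.lift_fst]
    _ = (sq.lift ≫ pullback.diagonal p) ≫ pullback.snd p p := by
      simp only [Category.assoc, pullback.diagonal_fst, pullback.diagonal_snd]
    _ = l₂ := by simp only [sq.fac_right, pullback.lift_snd]

lemma isColocal_rlp_of_initial_to [HasInitial C] [HasPullbacks C] (T : MorphismProperty C)
    [T.rlp.HasOfPostcompProperty T.rlp] {A : C} (hA : T (initial.to A)) : T.rlp.isColocal A := by
  intro X Y w hw
  have : HasLiftingProperty (initial.to A) w := hw _ hA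
  have : HasLiftingProperty (initial.to A) (pullback.diagonal w) :=
    T.rlp.hasOfPostcompProperty_iff_le_diagonal.1 inferInstance w hw _ hA
  refine ⟨fun f g hfg ↦ ?_, fun g ↦ ?_⟩
  · exact eq_of_hasLiftingProperty_diagonal (initial.to A) w (initial.hom_ext _ _) hfg
  · have sq : CommSq (initial.to X) (initial.to A) w g := ⟨initial.hom_ext _ _⟩
    exact ⟨sq.lift, sq.fac_right⟩

section Localization

variable {D : Type u'} [Category.{v'} D] (γ : C ⥤ D) (W : MorphismProperty C) [γ.IsLocalization W]

lemma map_injective_of_isColocal {A : C} (hA : W.isColocal A) (B : C) :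
    Function.Injective (fun f : A ⟶ B ↦ γ.map f) := by
  intro f g hfg
  have h_inverts : W.IsInvertedBy (coyoneda.obj (Opposite.op A)) :=
    fun _ _ w hw ↦ (isIso_iff_bijective _).2 (hA w hw)
  have h_coyoneda : (coyoneda.obj (Opposite.op A)).map f = (coyoneda.obj (Opposite.op A)).map g :=
    ((areEqualizedByLocalization_iff γ W f g).2 hfg).map_eq_of_isInvertedBy _ h_inverts
  simpa using ConcreteCategory.congr_hom h_coyoneda (𝟙 A)

lemma map_surjective_of_isColocal {A : C} (hA : W.isColocal A) (B : C) :
    Function.Surjective (fun f : A ⟶ B ↦ γ.map f) := by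
  suffices ∀ φ : StructuredArrow (γ.obj A) γ, ∃ f : A ⟶ φ.right, γ.map f = φ.hom from
    fun φ ↦ this (StructuredArrow.mk φ)
  intro φ
  induction φ using Localization.induction_structuredArrow γ W with
  | hP₀ => exact ⟨𝟙 A, γ.map_id A⟩
  | hP₁ g φ hφ =>
    obtain ⟨f, hf⟩ := hφ
    exact ⟨f ≫ g, by simp [hf]⟩
  | hP₂ w hw φ hφ =>
    obtain ⟨f, hf⟩ := hφ
    obtain ⟨f', rfl⟩ := (hA w hw).surjective f
    exact ⟨f', (Iso.eq_comp_inv _).2 (by simpa using hf)⟩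

lemma map_bijective_of_isColocal {A : C} (hA : W.isColocal A) (B : C) :
    Function.Bijective (fun f : A ⟶ B ↦ γ.map f) :=
  ⟨map_injective_of_isColocal γ W hA B, map_surjective_of_isColocal γ W hA B⟩

end Localization

lemma TwoOutOfThree.hasOfPostcompProperty {W : MorphismProperty C} (hW : TwoOutOfThree W) :
    W.HasOfPostcompProperty W where
  of_postcomp f g hg hfg := (hW f g).2.2 hfg hg

lemma IsModelStructure.eq_rlp_of_forall_fib {Cof Fib W : MorphismProperty C}
    (hm : IsModelStructure Cof Fib W) (hfib : ∀ ⦃X Y : C⦄ (f : X ⟶ Y), Fib f) : W = Cof.rlp := by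
  calc
    W = inter Fib W := by
      ext X Y f
      exact (and_iff_right (hfib f)).symm
    _ = Cof.rlp := hm.wfs_cof_trivFib.rlp_eq

theorem stmt_5_general [HasInitial C] [HasPullbacks C] {Cof W : MorphismProperty C}
    [W.HasOfPostcompProperty W] (hW : W = Cof.rlp)
    {D : Type u'} [Category.{v'} D] (γ : C ⥤ D) [γ.IsLocalization W] :
    (∀ A B : C, Cof (initial.to A) → Function.Bijective (fun f : A ⟶ B ↦ γ.map f)) ∧
      ∀ (Y Z CY CZ : C) (pY : CY ⟶ Y) (pZ : CZ ⟶ Z),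
        Cof (initial.to CY) → W pY → W pZ → Nonempty ((γ.obj Y ⟶ γ.obj Z) ≃ (CY ⟶ CZ)) := by
  subst hW
  have map_bijective (A B : C) (hA : Cof (initial.to A)) :
      Function.Bijective (fun f : A ⟶ B ↦ γ.map f) :=
    map_bijective_of_isColocal γ Cof.rlp (isColocal_rlp_of_initial_to Cof hA) B
  refine ⟨map_bijective, fun Y Z CY CZ pY pZ hCY hpY hpZ ↦ ⟨?_⟩⟩
  let eY := Localization.isoOfHom γ Cof.rlp pY hpY
  let eZ := Localization.isoOfHom γ Cof.rlp pZ hpZ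
  exact (eY.homCongr eZ).symm.trans (Equiv.ofBijective _ (map_bijective CY CZ hCY)).symm

/-- in a model category in which every morphism is a fibration and
every trivial cofibration is an isomorphism, the localization functor
`γ : C ⥤ Ho(C)` at the weak equivalences induces a bijection
`Hom(A, B) ≃ Hom(γ A, γ B)` for all cofibrant `A`, `B`; in particular, for any `Y`, `Z`
with cofibrant replacements `C(Y)`, `C(Z)`, the set `Hom(γ Y, γ Z)` is in bijection
with `Hom(C(Y), C(Z))`. -/
theorem stmt_5 {C : Type u} [Category.{v} C] [HasLimits C] [HasColimits C]
    (Cof Fib W : MorphismProperty C)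
    (hm : IsModelStructure Cof Fib W)
    (hfib : ∀ ⦃X Y : C⦄ (f : X ⟶ Y), Fib f)
    (htcof : ∀ ⦃X Y : C⦄ (f : X ⟶ Y), Cof f → W f → IsIso f)
    {D : Type u'} [Category.{v'} D] (γ : C ⥤ D) [γ.IsLocalization W] :
    (∀ A B : C, Cof (initial.to A) → Cof (initial.to B) →
        Function.Bijective (fun f : A ⟶ B => γ.map f)) ∧
      ∀ (Y Z CY CZ : C) (pY : CY ⟶ Y) (pZ : CZ ⟶ Z),
        Cof (initial.to CY) → W pY → Cof (initial.to CZ) → W pZ →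
          Nonempty ((γ.obj Y ⟶ γ.obj Z) ≃ (CY ⟶ CZ)) := by
  have := hm.twoOutOfThree.hasOfPostcompProperty
  exact (stmt_5_general (hm.eq_rlp_of_forall_fib hfib) γ).imp (fun h A B hA _ ↦ h A B hA)
    fun h Y Z CY CZ pY pZ hCY hpY _ ↦ h Y Z CY CZ pY pZ hCY hpY

end Paper
end

section
/- Let UGph be the category of undirected graphs, and let W_U be the class of morphisms f : X → Y of UGph such that for every p ≥ 1: the composition with f of every backtrack-free p-cycle of X is a backtrack-free p-cycle of Y, and the resulting map from the set of backtrack-free p-cycles of X to the set of backtrack-free p-cycles of Y is a bijection. Then there does not exist any model structure on UGph whose class of weak equivalences is W_U. -/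
open CategoryTheory

namespace Paper

/-- An undirected graph: a set of nodes, a set of half-arcs, source and target maps
and an involution `i` on half-arcs with `s ∘ i = t`. -/
structure UGraph : Type 1 where
  nodes : Type
  half : Type
  s : half → nodes
  t : half → nodes
  inv : half → half
  inv_inv : ∀ a, inv (inv a) = a
  s_inv : ∀ a, s (inv a) = t a

/-- A morphism of undirected graphs: maps on nodes and half-arcs commuting with
source, target and the involution. -/
@[ext]
structure UGraph.Hom (X Y : UGraph) where
  f0 : X.nodes → Y.nodes
  f1 : X.half → Y.half
  comm_s : ∀ a, Y.s (f1 a) = f0 (X.s a)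
  comm_t : ∀ a, Y.t (f1 a) = f0 (X.t a)
  comm_inv : ∀ a, Y.inv (f1 a) = f1 (X.inv a)

/-- The category of undirected graphs. -/
instance : Category UGraph where
  Hom := UGraph.Hom
  id X := ⟨id, id, fun _ => rfl, fun _ => rfl, fun _ => rfl⟩
  comp f g := ⟨g.f0 ∘ f.f0, g.f1 ∘ f.f1,
    fun a => by simp [Function.comp, g.comm_s, f.comm_s],
    fun a => by simp [Function.comp, g.comm_t, f.comm_t],
    fun a => by simp [Function.comp, g.comm_inv, f.comm_inv]⟩

@[simp] theorem UGraph.comp_f0 {X Y Z : UGraph} (f : X ⟶ Y) (g : Y ⟶ Z) :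
    (f ≫ g).f0 = g.f0 ∘ f.f0 := rfl

@[simp] theorem UGraph.comp_f1 {X Y Z : UGraph} (f : X ⟶ Y) (g : Y ⟶ Z) :
    (f ≫ g).f1 = g.f1 ∘ f.f1 := rfl

/-- two nodes are adjacent if some half-arc goes from one to the other. -/
def UGraph.adj (X : UGraph) (x y : X.nodes) : Prop :=
  ∃ u : X.half, X.s u = x ∧ X.t u = y

/-- An undirected graph is connected if any two nodes are joined by a finite
sequence of consecutively incident half-arcs. -/
def UGraph.Connected (X : UGraph) : Prop :=
  ∀ x y : X.nodes, Relation.ReflTransGen X.adj x y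

/-- The undirected `p`-cycle `c^p_U` : nodes `ℤ/pℤ`, half-arcs `[n]⁺ = (n, true)`
and `[n]⁻ = (n, false)` with `s [n]⁺ = [n]`, `t [n]⁺ = [n+1]`, `i [n]⁺ = [n]⁻`. -/
def cycleU (p : ℕ) : UGraph where
  nodes := ZMod p
  half := ZMod p × Bool
  s a := if a.2 then a.1 else a.1 + 1
  t a := if a.2 then a.1 + 1 else a.1
  inv a := (a.1, !a.2)
  inv_inv a := by simp
  s_inv a := by rcases a with ⟨n, _ | _⟩ <;> simp

/-- A `p`-cycle `h : c^p_U ⟶ X` is backtrack-free if `h₁([n+1]⁺) ≠ h₁([n]⁻)` for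
all `n`. -/
def BFree {p : ℕ} {X : UGraph} (h : cycleU p ⟶ X) : Prop :=
  ∀ n : ZMod p, h.f1 (n + 1, true) ≠ h.f1 (n, false)

/-- A morphism of undirected graphs is a covering if it restricts to a bijection on
the half-arcs issued from each node. -/
def IsCovering {X Y : UGraph} (f : X ⟶ Y) : Prop :=
  ∀ x : X.nodes,
    Function.Bijective (fun u : {u : X.half // X.s u = x} =>
      (⟨f.f1 u.1, by rw [f.comm_s, u.2]⟩ : {v : Y.half // Y.s v = f.f0 x}))

end Paper

namespace Paper

universe v u

variable {C : Type u} [Category.{v} C]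

/-- The class `W_U` : morphisms `f : X ⟶ Y` such that for every `p ≥ 1`,
composition with `f` sends backtrack-free `p`-cycles of `X` to backtrack-free
`p`-cycles of `Y` and induces a bijection between them. -/
def WU : MorphismProperty UGraph :=
  fun X Y f => ∀ p : ℕ, 1 ≤ p →
    ∃ H : ∀ h : cycleU p ⟶ X, BFree h → BFree (h ≫ f),
      Function.Bijective (fun h : {h : cycleU p ⟶ X // BFree h} =>
        (⟨h.1 ≫ f, H h.1 h.2⟩ : {h' : cycleU p ⟶ Y // BFree h'}))

/-!
Factor `edge ⟶ 1`, a weak equivalence since neither graph has a backtrack-free cycle, as a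
cofibration `g : edge ⟶ Z` followed by a trivial fibration `Z ⟶ 1`. Trivial fibrations are stable
under pullback, so `c² × Z ⟶ c²` is a weak equivalence; as the graph of every morphism `c² ⟶ Z` is
a backtrack-free section of it, there is at most one such morphism. Going back and forth along a
half-arc of `Z` starting from either end gives two, hence the involution of `Z` is the identity and
`g` folds the edge. But `g` is a trivial cofibration, so the morphism `edge ⟶ c¹` extends along `g`
after replacing `c¹` by a fibrant object; this folds the loop of `c¹` and destroys its
backtrack-free `1`-cycle.
-/

section ModelStructure

open Limits

variable {Cof Fib W : MorphismProperty C} {T : C}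

theorem IsWFS.hasLiftingProperty {L R : MorphismProperty C} (hLR : IsWFS L R) {A B X Y : C}
    {l : A ⟶ B} {r : X ⟶ Y} (hl : L l) (hr : R r) : HasLiftingProperty l r := by
  rw [hLR.rlp_eq] at hr
  exact hr l hl

theorem IsWFS.isStableUnderBaseChange {L R : MorphismProperty C} (hLR : IsWFS L R) :
    R.IsStableUnderBaseChange := by
  rw [hLR.rlp_eq]
  exact inferInstanceAs L.rlp.IsStableUnderBaseChange

theorem IsModelStructure.exists_trivCof_trivFib_to_terminal (M : IsModelStructure Cof Fib W)
    (hT : IsTerminal T) {E : C} (hE : W (hT.from E)) :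
    ∃ (Z : C) (g : E ⟶ Z), inter Cof W g ∧ inter Fib W (hT.from Z) := by
  obtain ⟨Z, g, h, hg, hh, fac⟩ := M.wfs_cof_trivFib.factor (hT.from E)
  have hgW : W g := (M.twoOutOfThree g h).2.2 (fac ▸ hE) hh.2
  exact ⟨Z, g, ⟨hg, hgW⟩, hT.hom_ext h (hT.from Z) ▸ hh⟩

theorem IsModelStructure.weakEquivalence_fst (M : IsModelStructure Cof Fib W)
    (hT : IsTerminal T) {X Z P : C} (hZ : inter Fib W (hT.from Z)) {fst : P ⟶ X} {snd : P ⟶ Z}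
    (hP : IsLimit (BinaryFan.mk fst snd)) : W fst := by
  have := M.wfs_cof_trivFib.isStableUnderBaseChange
  exact (MorphismProperty.of_isPullback (IsPullback.of_is_product hP hT).flip hZ).2

theorem IsModelStructure.exists_extension_up_to_weakEquivalence (M : IsModelStructure Cof Fib W)
    (hT : IsTerminal T) {E Z X : C} {g : E ⟶ Z} (hg : inter Cof W g) (f : E ⟶ X) :
    ∃ (Y : C) (j : X ⟶ Y) (k : Z ⟶ Y), W j ∧ g ≫ k = f ≫ j := by
  obtain ⟨Y, j, q, ⟨-, hj⟩, hq, -⟩ := M.wfs_trivCof_fib.factor (hT.from X)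
  have := M.wfs_trivCof_fib.hasLiftingProperty hg hq
  have sq : CommSq (f ≫ j) g q (hT.from Z) := ⟨hT.hom_ext _ _⟩
  exact ⟨Y, j, sq.lift, hj, sq.fac_left⟩

end ModelStructure

namespace UGraph

open Limits

theorem t_inv (X : UGraph) (a : X.half) : X.t (X.inv a) = X.s a := by
  rw [← X.s_inv, X.inv_inv]

/-- The terminal graph: one node and one half-arc, which is its own inverse. -/
def terminal : UGraph where
  nodes := Unit
  half := Unit
  s _ := ()
  t _ := ()
  inv _ := ()
  inv_inv _ := rfl
  s_inv _ := rfl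

/-- The universal property of `terminal`. -/
def terminalIsTerminal : IsTerminal terminal :=
  IsTerminal.ofUniqueHom
    (fun _ => Hom.mk (fun _ => ()) (fun _ => ()) (fun _ => rfl) (fun _ => rfl) (fun _ => rfl))
    (fun _ _ => rfl)

theorem terminal_s_injective : Function.Injective terminal.s := fun _ _ _ => rfl

/-- The categorical product of two graphs, computed on nodes and on half-arcs separately. -/
def prod (X Z : UGraph) : UGraph where
  nodes := X.nodes × Z.nodes
  half := X.half × Z.half
  s a := (X.s a.1, Z.s a.2)
  t a := (X.t a.1, Z.t a.2)
  inv a := (X.inv a.1, Z.inv a.2)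
  inv_inv a := Prod.ext (X.inv_inv a.1) (Z.inv_inv a.2)
  s_inv a := Prod.ext (X.s_inv a.1) (Z.s_inv a.2)

/-- The first projection of `prod X Z`. -/
def prodFst (X Z : UGraph) : prod X Z ⟶ X :=
  Hom.mk Prod.fst Prod.fst (fun _ => rfl) (fun _ => rfl) (fun _ => rfl)

/-- The second projection of `prod X Z`. -/
def prodSnd (X Z : UGraph) : prod X Z ⟶ Z :=
  Hom.mk Prod.snd Prod.snd (fun _ => rfl) (fun _ => rfl) (fun _ => rfl)

/-- The morphism into `prod X Z` with components `f` and `g`. -/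
def prodLift {A X Z : UGraph} (f : A ⟶ X) (g : A ⟶ Z) : A ⟶ prod X Z :=
  Hom.mk (fun a => (f.f0 a, g.f0 a)) (fun a => (f.f1 a, g.f1 a))
    (fun a => Prod.ext (f.comm_s a) (g.comm_s a)) (fun a => Prod.ext (f.comm_t a) (g.comm_t a))
    (fun a => Prod.ext (f.comm_inv a) (g.comm_inv a))

/-- The universal property of `prod X Z`. -/
def prodIsLimit (X Z : UGraph) : IsLimit (BinaryFan.mk (prodFst X Z) (prodSnd X Z)) :=
  BinaryFan.isLimitMk (fun c => prodLift c.fst c.snd) (fun _ => rfl) (fun _ => rfl)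
    fun c m hfst hsnd => by
      rw [← hfst, ← hsnd]
      rfl

/-- The graph with two nodes joined by one edge. A half-arc is named after its source node, so
`true : edge.half` goes from `true` to `false`. -/
def edge : UGraph where
  nodes := Bool
  half := Bool
  s b := b
  t b := !b
  inv b := !b
  inv_inv := Bool.not_not
  s_inv _ := rfl

theorem edge_s_injective : Function.Injective edge.s := Function.injective_id

/-- The morphism `edge ⟶ X` classifying a half-arc `a` of `X`: it sends `true` to `a`. -/
def ofHalf {X : UGraph} (a : X.half) : edge ⟶ X :=
  Hom.mk (fun b => X.s (bif b then a else X.inv a)) (fun b => bif b then a else X.inv a)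
    (fun _ => rfl)
    (fun | true => (X.s_inv a).symm | false => X.t_inv a)
    (fun | true => rfl | false => X.inv_inv a)

/-- The `2`-cycle going back and forth along `edge`. -/
def foldCycle : cycleU 2 ⟶ edge :=
  Hom.mk (fun n : ZMod 2 => decide (n = 0)) (fun a : ZMod 2 × Bool => decide (a.1 = 0) == a.2)
    (by unfold cycleU edge; decide) (by unfold cycleU edge; decide) (by unfold cycleU edge; decide)

theorem inv_eq_self_of_subsingleton_hom {Z : UGraph} [Subsingleton (cycleU 2 ⟶ Z)] (a : Z.half) :
    Z.inv a = a := by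
  have h : foldCycle ≫ ofHalf (Z.inv a) = foldCycle ≫ ofHalf a := Subsingleton.elim _ _
  exact congrFun (congrArg Hom.f1 h) ((0 : ZMod 2), true)

end UGraph

open UGraph

section BacktrackFree

variable {p : ℕ} {X Y Z : UGraph}

theorem BFree.of_comp {h : cycleU p ⟶ X} {f : X ⟶ Y} (hb : BFree (h ≫ f)) : BFree h :=
  fun n e => hb n (congrArg f.f1 e)

theorem bFree_id (p : ℕ) : BFree (𝟙 (cycleU p)) :=
  fun _ e => Bool.noConfusion (congrArg Prod.snd e)

theorem BFree.inv_ne_self {h : cycleU 1 ⟶ X} (hb : BFree h) :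
    X.inv (h.f1 ((0 : ZMod 1), true)) ≠ h.f1 ((0 : ZMod 1), true) :=
  fun e => hb 0 (e.symm.trans (h.comm_inv _))

theorem not_bFree_of_injective_s (hX : Function.Injective X.s) (h : cycleU p ⟶ X) : ¬ BFree h :=
  fun hb => hb 0 (hX ((h.comm_s (0 + 1, true)).trans (h.comm_s (0, false)).symm))

theorem WU.of_injective_s (hX : Function.Injective X.s) (hY : Function.Injective Y.s)
    (f : X ⟶ Y) : WU f := fun _ _ =>
  ⟨fun h hb => (not_bFree_of_injective_s hX h hb).elim,
    fun h => (not_bFree_of_injective_s hX h.1 h.2).elim,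
    fun h => (not_bFree_of_injective_s hY h.1 h.2).elim⟩

theorem WU.bFree {j : cycleU p ⟶ Y} (hj : WU j) (hp : 1 ≤ p) : BFree j :=
  (hj p hp).choose (𝟙 (cycleU p)) (bFree_id p)

theorem WU.subsingleton_hom_of_prodFst (hp : 1 ≤ p) (hfst : WU (prodFst (cycleU p) Z)) :
    Subsingleton (cycleU p ⟶ Z) := by
  obtain ⟨_, hinj, -⟩ := hfst p hp
  have bFree_graph (u : cycleU p ⟶ Z) : BFree (prodLift (𝟙 (cycleU p)) u) :=
    BFree.of_comp (f := prodFst _ _) (bFree_id p)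
  refine ⟨fun u v => ?_⟩
  have h := @hinj ⟨_, bFree_graph u⟩ ⟨_, bFree_graph v⟩ rfl
  exact congrArg (fun w => w.1 ≫ prodSnd _ _) h

end BacktrackFree

/-- there is no model structure on the category of undirected graphs
whose class of weak equivalences is `W_U`. -/
theorem stmt_8 : ¬ ∃ Cof Fib : MorphismProperty UGraph,
    IsModelStructure Cof Fib WU := by
  rintro ⟨Cof, Fib, M⟩
  have hedge : WU (terminalIsTerminal.from edge) :=
    WU.of_injective_s edge_s_injective terminal_s_injective _
  obtain ⟨Z, g, hg, hZ⟩ := M.exists_trivCof_trivFib_to_terminal terminalIsTerminal hedge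
  have hfst : WU (prodFst (cycleU 2) Z) :=
    M.weakEquivalence_fst terminalIsTerminal hZ (prodIsLimit _ _)
  have : Subsingleton (cycleU 2 ⟶ Z) := WU.subsingleton_hom_of_prodFst one_le_two hfst
  obtain ⟨Y, j, k, hj, hgk⟩ := M.exists_extension_up_to_weakEquivalence terminalIsTerminal hg
    (ofHalf (X := cycleU 1) ((0 : ZMod 1), true))
  have hloop : k.f1 (g.f1 true) = j.f1 ((0 : ZMod 1), true) := congrFun (congrArg Hom.f1 hgk) true
  refine (hj.bFree le_rfl).inv_ne_self ?_
  rw [← hloop, k.comm_inv, inv_eq_self_of_subsingleton_hom]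

end Paper
end
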